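/- (Claim 7: strong converse part of Theorem 8, common-message BC.) For every rate triple (R, R_𝒴, R_𝒵) ∈ [0,∞)³, all positive constants λ₁^𝒴, λ₂^𝒴, λ₁^𝒵, λ₂^𝒵 with λ₁^𝒴 + λ₂^𝒴 + λ₁^𝒵 + λ₂^𝒵 < 1, and every ε > 0, there exists η₀ ∈ ℕ such that for every blocklength n ≥ η₀ and all finite sets ℳ, ℳ_𝒴, ℳ_𝒵 with |ℳ| = ⌈exp(exp(nR))⌉, |ℳ_𝒴| = ⌈exp(exp(n R_𝒴))⌉, |ℳ_𝒵| = ⌈exp(exp(n R_𝒵))⌉, a necessary condition for an (n, ℳ, ℳ_𝒴, ℳ_𝒵, λ₁^𝒴, λ₂^𝒴, λ₁^𝒵, λ₂^𝒵) average-error ID code for the BC W(y,z|x) with a common message to exist is that for some PMF P on 𝒳: R < I(P, W_𝒴) + ε, R_𝒴 < I(P, W_𝒴) + ε, R < I(P, W_𝒵) + ε, and R_𝒵 < I(P, W_𝒵) + ε. -/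

import Mathlib

open scoped Classical
open Finset

noncomputable section

/-- `P` is a probability mass function on the finite type `X`. -/
def IsPMF {X : Type*} [Fintype X] (P : X → ℝ) : Prop :=
  (∀ x, 0 ≤ P x) ∧ ∑ x, P x = 1

/-- `W` is a (discrete memoryless) channel from `X` to `Y`. -/
def IsChannel {X Y : Type*} [Fintype Y] (W : X → Y → ℝ) : Prop :=
  (∀ x y, 0 ≤ W x y) ∧ ∀ x, ∑ y, W x y = 1

/-- The `n`-fold memoryless extension `W^n(𝐲|𝐱) = ∏ᵢ W(yᵢ|xᵢ)`. -/
def Wn {X Y : Type*} (W : X → Y → ℝ) (n : ℕ) (x : Fin n → X) (y : Fin n → Y) : ℝ :=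
  ∏ i, W (x i) (y i)

/-- Mutual information `I(P,W)` (natural logarithm), with the convention that
terms with `P x * W x y = 0` contribute `0`. -/
def mutInf {X Y : Type*} [Fintype X] [Fintype Y] (P : X → ℝ) (W : X → Y → ℝ) : ℝ :=
  ∑ x, ∑ y, if P x * W x y = 0 then 0
    else P x * W x y * Real.log (W x y / ∑ x', P x' * W x' y)

/-- The error requirements of an `(n, M, l1, l2)` ID code for the DMC `W`:
maximum probability of missed identification at most `l1`, maximum probability
of wrong identification at most `l2`. -/
def IDCodeErr {X Y M : Type*} [Fintype X] [Fintype Y]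
    (n : ℕ) (W : X → Y → ℝ) (Q : M → (Fin n → X) → ℝ)
    (D : M → Finset (Fin n → Y)) (l1 l2 : ℝ) : Prop :=
  (∀ m, ∑ x, Q m x * ∑ y ∈ (D m)ᶜ, Wn W n x y ≤ l1) ∧
  (∀ m m', m ≠ m' → ∑ x, Q m x * ∑ y ∈ D m', Wn W n x y ≤ l2)

/-- `(n, M, l1, l2)` ID code for the DMC `W`. -/
def IsIDCode {X Y M : Type*} [Fintype X] [Fintype Y]
    (n : ℕ) (W : X → Y → ℝ) (Q : M → (Fin n → X) → ℝ)
    (D : M → Finset (Fin n → Y)) (l1 l2 : ℝ) : Prop :=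
  (∀ m, IsPMF (Q m)) ∧ IDCodeErr n W Q D l1 l2

/-- `W` is a two-receiver broadcast channel from `X` to `Y × Z`. -/
def IsBC {X Y Z : Type*} [Fintype Y] [Fintype Z] (W : X → Y → Z → ℝ) : Prop :=
  (∀ x y z, 0 ≤ W x y z) ∧ ∀ x, ∑ y, ∑ z, W x y z = 1

/-- Marginal channel to terminal `Y`. -/
def margY {X Y Z : Type*} [Fintype Z] (W : X → Y → Z → ℝ) : X → Y → ℝ :=
  fun x y => ∑ z, W x y z

/-- Marginal channel to terminal `Z`. -/
def margZ {X Y Z : Type*} [Fintype Y] (W : X → Y → Z → ℝ) : X → Z → ℝ :=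
  fun x z => ∑ y, W x y z

/-- Average-error ID code for the BC with a common message: each receiver
identifies the pair (common message, its private message) jointly; the mixture
codes, averaged over the other receiver's private message and indexed by the
corresponding pairs, are ID codes for the marginal channels. -/
def IsCMIDCode {X Y Z : Type*} [Fintype X] [Fintype Y] [Fintype Z]
    (n k kY kZ : ℕ) (W : X → Y → Z → ℝ)
    (Q : Fin k → Fin kY → Fin kZ → (Fin n → X) → ℝ)
    (DY : Fin k → Fin kY → Finset (Fin n → Y))
    (DZ : Fin k → Fin kZ → Finset (Fin n → Z))
    (l1Y l2Y l1Z l2Z : ℝ) : Prop :=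
  (∀ m my mz, IsPMF (Q m my mz)) ∧
  IDCodeErr n (margY W)
    (fun p : Fin k × Fin kY => fun x => (kZ : ℝ)⁻¹ * ∑ mz, Q p.1 p.2 mz x)
    (fun p : Fin k × Fin kY => DY p.1 p.2) l1Y l2Y ∧
  IDCodeErr n (margZ W)
    (fun p : Fin k × Fin kZ => fun x => (kY : ℝ)⁻¹ * ∑ my, Q p.1 my p.2 x)
    (fun p : Fin k × Fin kZ => DZ p.1 p.2) l1Z l2Z

/-- Second moment of a sum of independent centred variables on a finite product space. -/
lemma sum_prod_mul_sq_sum {ι A : Type*} [Fintype ι] [DecidableEq ι] [Fintype A]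
    (p g : ι → A → ℝ) (hp : ∀ i, ∑ a, p i a = 1) (hg : ∀ i, ∑ a, p i a * g i a = 0) :
    ∑ a : ι → A, (∏ i, p i (a i)) * (∑ i, g i (a i)) ^ 2 = ∑ i, ∑ a, p i a * g i a ^ 2 := by
  have key : ∀ i j, ∑ a : ι → A, (∏ l, p l (a l)) * (g i (a i) * g j (a j)) =
      if i = j then ∑ a, p i a * g i a ^ 2 else 0 := by
    intro i j
    have h1 : ∀ a : ι → A, (∏ l, p l (a l)) * (g i (a i) * g j (a j)) =
        ∏ l, (p l (a l) * ((if l = i then g l (a l) else 1) *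
          (if l = j then g l (a l) else 1))) := by
      intro a
      rw [Finset.prod_mul_distrib, Finset.prod_mul_distrib, Finset.prod_ite_eq',
        Finset.prod_ite_eq']
      simp
    simp_rw [h1]
    rw [← Fintype.prod_sum (fun l b => p l b * ((if l = i then g l b else 1) *
          (if l = j then g l b else 1)))]
    split_ifs with hij
    · subst hij
      rw [Finset.prod_eq_single i]
      · simp [sq]
      · intro l _ hl
        simp [hl, hp]
      · simp
    · apply Finset.prod_eq_zero (Finset.mem_univ i)
      simp [hij, hg]
  calc ∑ a : ι → A, (∏ i, p i (a i)) * (∑ i, g i (a i)) ^ 2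
      = ∑ i, ∑ j, ∑ a : ι → A, (∏ l, p l (a l)) * (g i (a i) * g j (a j)) := by
        simp_rw [sq, Finset.sum_mul_sum, Finset.mul_sum]
        rw [Finset.sum_comm]
        exact Finset.sum_congr rfl fun i _ => Finset.sum_comm
    _ = _ := by simp [key]

/-- The total mass of a finite product of probability weights is one. -/
lemma sum_prod_eq_one {ι A : Type*} [Fintype ι] [DecidableEq ι] [Fintype A]
    (p : ι → A → ℝ) (hp : ∀ i, ∑ a, p i a = 1) : ∑ a : ι → A, ∏ i, p i (a i) = 1 := by
  rw [← Fintype.prod_sum p]; simp [hp]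

/-- Subtracting the mean does not increase the second moment. -/
lemma sum_mul_sub_mean_sq_le {A : Type*} [Fintype A] (p f : A → ℝ) (hp : ∑ a, p a = 1) :
    ∑ a, p a * (f a - ∑ b, p b * f b) ^ 2 ≤ ∑ a, p a * f a ^ 2 := by
  have h : ∀ c : ℝ, ∑ a, p a * (f a - c) ^ 2 = ∑ a, p a * f a ^ 2 - 2 * c * (∑ b, p b * f b)
      + c ^ 2 * ∑ a, p a := by
    intro c
    rw [Finset.mul_sum, Finset.mul_sum, ← Finset.sum_sub_distrib, ← Finset.sum_add_distrib]
    exact Finset.sum_congr rfl fun a _ => by ring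
  rw [h, hp]
  nlinarith [sq_nonneg (∑ b, p b * f b)]

/-- Subtracting the mean centres a function. -/
lemma sum_mul_sub_mean {A : Type*} [Fintype A] (p f : A → ℝ) (hp : ∑ a, p a = 1) :
    ∑ a, p a * (f a - ∑ b, p b * f b) = 0 := by
  simp_rw [mul_sub, Finset.sum_sub_distrib, ← Finset.sum_mul, hp]
  ring

/-- One-sided Chebyshev bound for sums of independent variables on a finite product space. -/
lemma sum_prod_tail_le {ι A : Type*} [Fintype ι] [DecidableEq ι] [Fintype A]
    (p g : ι → A → ℝ) (hp0 : ∀ i a, 0 ≤ p i a) (hp : ∀ i, ∑ a, p i a = 1) {t : ℝ} (ht : 0 < t)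
    (S : Finset (ι → A))
    (hS : ∀ a ∈ S, (∑ i, ∑ b, p i b * g i b) + t ≤ ∑ i, g i (a i)) :
    ∑ a ∈ S, ∏ i, p i (a i) ≤ (∑ i, ∑ a, p i a * g i a ^ 2) / t ^ 2 := by
  rw [le_div_iff₀ (by positivity), Finset.sum_mul]
  have h := sum_prod_mul_sq_sum p (fun i a => g i a - ∑ b, p i b * g i b) hp
    (fun i => sum_mul_sub_mean _ _ (hp i))
  calc ∑ a ∈ S, (∏ i, p i (a i)) * t ^ 2
      ≤ ∑ a ∈ S, (∏ i, p i (a i)) * (∑ i, (g i (a i) - ∑ b, p i b * g i b)) ^ 2 := by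
        refine Finset.sum_le_sum fun a ha => ?_
        have h0 : 0 ≤ ∏ i, p i (a i) := Finset.prod_nonneg fun i _ => hp0 i _
        refine mul_le_mul_of_nonneg_left ?_ h0
        have := hS a ha
        rw [Finset.sum_sub_distrib]
        exact pow_le_pow_left₀ ht.le (by linarith) 2
    _ ≤ ∑ a : ι → A, (∏ i, p i (a i)) * (∑ i, (g i (a i) - ∑ b, p i b * g i b)) ^ 2 := by
        refine Finset.sum_le_sum_of_subset_of_nonneg (Finset.subset_univ _) fun a _ _ => ?_
        exact mul_nonneg (Finset.prod_nonneg fun i _ => hp0 i _) (sq_nonneg _)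
    _ = _ := h
    _ ≤ _ := Finset.sum_le_sum fun i _ => sum_mul_sub_mean_sq_le _ _ (hp i)

/-- Jensen's inequality for the square on a finite probability space. -/
lemma sum_mul_abs_le_sqrt {A : Type*} [Fintype A] (w d : A → ℝ) (hw0 : ∀ a, 0 ≤ w a)
    (hw : ∑ a, w a = 1) : ∑ a, w a * |d a| ≤ √(∑ a, w a * d a ^ 2) := by
  have h := Real.sum_sqrt_mul_sqrt_le Finset.univ (f := w) (g := fun a => w a * d a ^ 2) hw0
    (fun a => mul_nonneg (hw0 a) (sq_nonneg _))
  rw [hw, Real.sqrt_one, one_mul] at h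
  refine le_trans (le_of_eq (Finset.sum_congr rfl fun a _ => ?_)) h
  rw [Real.sqrt_mul (hw0 a), Real.sqrt_sq_eq_abs, ← mul_assoc, Real.mul_self_sqrt (hw0 a)]

/-- Soft covering: some empirical average of `K` rows of the kernel `U` approximates its average
under `p` in `ℓ¹`. -/
lemma exists_soft_covering {A O : Type*} [Fintype A] [Fintype O] (p : A → ℝ) (hp : IsPMF p)
    (U : A → O → ℝ) (hU0 : ∀ a y, 0 ≤ U a y) (hU1 : ∀ a, ∑ y, U a y ≤ 1)
    (r : O → ℝ) (hr : ∀ y, 0 ≤ r y) {L : ℝ} (hL : 0 ≤ L) (hUL : ∀ a y, U a y ≤ L * r y)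
    {K : ℕ} (hK : 0 < K) :
    ∃ a : Fin K → A, (∀ i, p (a i) ≠ 0) ∧
      ∑ y, |(K : ℝ)⁻¹ * ∑ i, U (a i) y - ∑ b, p b * U b y| ≤ √(L * (∑ y, r y) / K) := by
  obtain ⟨hp0, hp1⟩ := hp
  have hK' : (0 : ℝ) < K := by exact_mod_cast hK
  set s := √(L * (∑ y, r y) / K) with hs
  set w : (Fin K → A) → ℝ := fun a => ∏ i, p (a i) with hw
  have hw0 : ∀ a, 0 ≤ w a := fun a => Finset.prod_nonneg fun i _ => hp0 _
  have hw1 : ∑ a, w a = 1 := sum_prod_eq_one (fun _ : Fin K => p) (fun _ => hp1)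
  set d : (Fin K → A) → O → ℝ :=
    fun a y => (K : ℝ)⁻¹ * ∑ i, U (a i) y - ∑ b, p b * U b y with hd
  set m : O → ℝ := fun y => ∑ b, p b * U b y with hm
  have hm0 : ∀ y, 0 ≤ m y := fun y => Finset.sum_nonneg fun b _ => mul_nonneg (hp0 b) (hU0 b y)
  have hm1 : ∑ y, m y ≤ 1 := by
    rw [hm, Finset.sum_comm]
    calc ∑ b, ∑ y, p b * U b y = ∑ b, p b * ∑ y, U b y := by simp_rw [Finset.mul_sum]
      _ ≤ ∑ b, p b * 1 := Finset.sum_le_sum fun b _ => mul_le_mul_of_nonneg_left (hU1 b) (hp0 b)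
      _ = 1 := by simp [hp1]
  have hvar : ∀ y, ∑ a, w a * d a y ^ 2 ≤ (L / K * r y) * m y := by
    intro y
    have hdy : ∀ a, d a y = (K : ℝ)⁻¹ * ∑ i, (U (a i) y - m y) := by
      intro a
      simp only [hd, hm, Finset.sum_sub_distrib, Finset.sum_const, Finset.card_univ,
        Fintype.card_fin, nsmul_eq_mul]
      field_simp
    have h := sum_prod_mul_sq_sum (fun _ : Fin K => p) (fun _ b => U b y - m y) (fun _ => hp1)
      (fun _ => sum_mul_sub_mean p (fun b => U b y) hp1)
    have h2 : ∑ b, p b * (U b y - m y) ^ 2 ≤ L * r y * m y := by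
      refine (sum_mul_sub_mean_sq_le p (fun b => U b y) hp1).trans ?_
      rw [hm, Finset.mul_sum]
      refine Finset.sum_le_sum fun b _ => ?_
      nlinarith [mul_le_mul_of_nonneg_left (hUL b y) (mul_nonneg (hp0 b) (hU0 b y))]
    calc ∑ a, w a * d a y ^ 2
        = (K : ℝ)⁻¹ ^ 2 * ∑ a : Fin K → A, (∏ i, p (a i)) * (∑ i, (U (a i) y - m y)) ^ 2 := by
          rw [Finset.mul_sum]
          refine Finset.sum_congr rfl fun a _ => ?_
          rw [hdy a]; ring
      _ = (K : ℝ)⁻¹ * ∑ b, p b * (U b y - m y) ^ 2 := by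
          rw [h]
          simp only [Finset.sum_const, Finset.card_univ, Fintype.card_fin, nsmul_eq_mul]
          field_simp
      _ ≤ (K : ℝ)⁻¹ * (L * r y * m y) := mul_le_mul_of_nonneg_left h2 (by positivity)
      _ = _ := by ring
  have hE : ∑ a, w a * ∑ y, |d a y| ≤ s := by
    calc ∑ a, w a * ∑ y, |d a y| = ∑ y, ∑ a, w a * |d a y| := by
          simp_rw [Finset.mul_sum]; exact Finset.sum_comm
      _ ≤ ∑ y, √(L / K * r y) * √(m y) := by
          refine Finset.sum_le_sum fun y _ => ?_
          refine (sum_mul_abs_le_sqrt w (fun a => d a y) hw0 hw1).trans ?_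
          rw [← Real.sqrt_mul (mul_nonneg (by positivity) (hr y))]
          exact Real.sqrt_le_sqrt (hvar y)
      _ ≤ √(∑ y, L / K * r y) * √(∑ y, m y) :=
          Real.sum_sqrt_mul_sqrt_le Finset.univ (fun y => mul_nonneg (by positivity) (hr y)) hm0
      _ ≤ √(∑ y, L / K * r y) * 1 :=
          mul_le_mul_of_nonneg_left (Real.sqrt_le_one.mpr hm1) (Real.sqrt_nonneg _)
      _ = s := by rw [mul_one, ← Finset.mul_sum, hs]; congr 1; ring
  by_contra! hcon
  have hpos : ∀ a, w a ≠ 0 → s < ∑ y, |d a y| := fun a ha =>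
    hcon a fun i hi => ha (Finset.prod_eq_zero (Finset.mem_univ i) hi)
  obtain ⟨a₀, ha₀⟩ : ∃ a, w a ≠ 0 := by
    by_contra! h
    simp [h] at hw1
  have : ∑ a, w a * s < ∑ a, w a * ∑ y, |d a y| := by
    refine Finset.sum_lt_sum (fun a _ => ?_) ⟨a₀, Finset.mem_univ _, ?_⟩
    · by_cases ha : w a = 0
      · simp [ha]
      · exact mul_le_mul_of_nonneg_left (hpos a ha).le (hw0 a)
    · exact mul_lt_mul_of_pos_left (hpos a₀ ha₀) (lt_of_le_of_ne (hw0 a₀) (Ne.symm ha₀))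
  rw [← Finset.sum_mul, hw1, one_mul] at this
  linarith

/-- Mutual information is nonnegative. -/
lemma mutInf_nonneg {X Y : Type*} [Fintype X] [Fintype Y] {P : X → ℝ} (hP : IsPMF P)
    {W : X → Y → ℝ} (hW : IsChannel W) : 0 ≤ mutInf P W := by
  obtain ⟨hP0, hP1⟩ := hP
  obtain ⟨hW0, hW1⟩ := hW
  set q : Y → ℝ := fun y => ∑ x, P x * W x y with hq
  have hq0 : ∀ y, 0 ≤ q y := fun y => Finset.sum_nonneg fun x _ => mul_nonneg (hP0 x) (hW0 x y)
  have hsum : ∑ x, ∑ y, P x * W x y = 1 := by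
    simp_rw [← Finset.mul_sum, hW1, mul_one, hP1]
  have hq1 : ∑ y, q y = 1 := by rw [hq, Finset.sum_comm, hsum]
  have hkey : ∑ x, ∑ y, (P x * W x y - P x * q y) = 0 := by
    simp_rw [Finset.sum_sub_distrib]
    rw [hsum]
    simp_rw [← Finset.mul_sum, hq1, mul_one, hP1, sub_self]
  rw [← hkey]
  refine Finset.sum_le_sum fun x _ => Finset.sum_le_sum fun y _ => ?_
  split_ifs with h
  · rw [h]; linarith [mul_nonneg (hP0 x) (hq0 y)]
  · have hPx : 0 < P x := lt_of_le_of_ne (hP0 x) fun h' => h (by rw [← h', zero_mul])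
    have hWx : 0 < W x y := lt_of_le_of_ne (hW0 x y) fun h' => h (by rw [← h', mul_zero])
    have hqy : 0 < q y := lt_of_lt_of_le (mul_pos hPx hWx)
      (Finset.single_le_sum (f := fun x => P x * W x y)
        (fun x _ => mul_nonneg (hP0 x) (hW0 x y)) (Finset.mem_univ x))
    have h1 := Real.one_sub_inv_le_log_of_pos (div_pos hWx hqy)
    calc P x * W x y - P x * q y = P x * W x y * (1 - (W x y / q y)⁻¹) := by
          field_simp
      _ ≤ _ := mul_le_mul_of_nonneg_left h1 (mul_pos hPx hWx).le

/-- The type (empirical distribution) of a sequence. -/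
def seqType {X : Type*} {n : ℕ} (x : Fin n → X) (a : X) : ℝ :=
  (#{i | x i = a} : ℝ) / n

lemma sum_comp_eq_mul_sum_seqType {X : Type*} [Fintype X] {n : ℕ} (hn : 0 < n)
    (x : Fin n → X) (f : X → ℝ) : ∑ i, f (x i) = n * ∑ a, seqType x a * f a := by
  have hn' : (n : ℝ) ≠ 0 := by exact_mod_cast hn.ne'
  rw [← Finset.sum_fiberwise Finset.univ x, Finset.mul_sum]
  refine Finset.sum_congr rfl fun a _ => ?_
  rw [Finset.sum_congr rfl (g := fun _ => f a)
    (fun i hi => by rw [(Finset.mem_filter.mp hi).2]), Finset.sum_const, nsmul_eq_mul, seqType]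
  field_simp

lemma isPMF_seqType {X : Type*} [Fintype X] {n : ℕ} (hn : 0 < n) (x : Fin n → X) :
    IsPMF (seqType x) := by
  refine ⟨fun a => by unfold seqType; positivity, ?_⟩
  have hn' : (n : ℝ) ≠ 0 := by exact_mod_cast hn.ne'
  have h := sum_comp_eq_mul_sum_seqType hn x (fun _ => 1)
  simp only [Finset.sum_const, Finset.card_univ, Fintype.card_fin, nsmul_eq_mul, mul_one] at h
  exact mul_left_cancel₀ hn' (by linarith)

/-- The number of types of sequences of length `n` is polynomial in `n`. -/
lemma card_image_seqType_le {X : Type*} [Fintype X] (n : ℕ) :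
    #(Finset.univ.image (seqType : (Fin n → X) → X → ℝ)) ≤ (n + 1) ^ Fintype.card X := by
  calc #(Finset.univ.image (seqType : (Fin n → X) → X → ℝ))
      ≤ #(Finset.univ.image fun (c : X → Fin (n + 1)) (a : X) => ((c a : ℕ) : ℝ) / n) := by
        refine Finset.card_le_card fun P hP => ?_
        obtain ⟨x, -, rfl⟩ := Finset.mem_image.mp hP
        refine Finset.mem_image.mpr ⟨fun a => ⟨#{i | x i = a}, ?_⟩, Finset.mem_univ _, rfl⟩
        exact Nat.lt_succ_of_le ((Finset.card_le_univ _).trans_eq (Fintype.card_fin n))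
    _ ≤ #(Finset.univ : Finset (X → Fin (n + 1))) := Finset.card_image_le
    _ = (n + 1) ^ Fintype.card X := by simp

/-- The output distribution of `P` through `W`, mixed with a small uniform part which keeps it
bounded away from zero. -/
def smoothedOutput {X Y : Type*} [Fintype X] [Fintype Y] (γ : ℝ) (P : X → ℝ) (W : X → Y → ℝ)
    (y : Y) : ℝ :=
  Real.exp (-γ) * ∑ x, P x * W x y + (1 - Real.exp (-γ)) / Fintype.card Y

section SmoothedOutput

variable {X Y : Type*} [Fintype X] [Fintype Y] {γ : ℝ} {P : X → ℝ} {W : X → Y → ℝ}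

lemma output_nonneg (hP : IsPMF P) (hW : IsChannel W) (y : Y) : 0 ≤ ∑ x, P x * W x y :=
  Finset.sum_nonneg fun x _ => mul_nonneg (hP.1 x) (hW.1 x y)

lemma le_smoothedOutput (hP : IsPMF P) (hW : IsChannel W) (y : Y) :
    (1 - Real.exp (-γ)) / Fintype.card Y ≤ smoothedOutput γ P W y :=
  le_add_of_nonneg_left (mul_nonneg (Real.exp_pos _).le (output_nonneg hP hW y))

variable [Nonempty Y]

lemma sum_smoothedOutput (hP : IsPMF P) (hW : IsChannel W) :
    ∑ y, smoothedOutput γ P W y = 1 := by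
  have hsum : ∑ y, ∑ x, P x * W x y = 1 := by
    rw [Finset.sum_comm]
    simp_rw [← Finset.mul_sum, hW.2, mul_one, hP.2]
  have hc : (Fintype.card Y : ℝ) ≠ 0 := by exact_mod_cast Fintype.card_ne_zero
  simp only [smoothedOutput]
  rw [Finset.sum_add_distrib, ← Finset.mul_sum, hsum, Finset.sum_const, Finset.card_univ,
    nsmul_eq_mul]
  field_simp
  ring

lemma uniformPart_pos (hγ : 0 < γ) : 0 < (1 - Real.exp (-γ)) / Fintype.card Y := by
  have : Real.exp (-γ) < 1 := by
    rw [← Real.exp_zero]; exact Real.exp_lt_exp.mpr (by linarith)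
  exact div_pos (by linarith) (by exact_mod_cast Fintype.card_pos)

lemma smoothedOutput_pos (hP : IsPMF P) (hW : IsChannel W) (hγ : 0 < γ) (y : Y) :
    0 < smoothedOutput γ P W y :=
  (uniformPart_pos hγ).trans_le (le_smoothedOutput hP hW y)

lemma smoothedOutput_le_one (hP : IsPMF P) (hW : IsChannel W) (hγ : 0 < γ) (y : Y) :
    smoothedOutput γ P W y ≤ 1 := by
  rw [← sum_smoothedOutput (γ := γ) hP hW]
  exact Finset.single_le_sum (fun y _ => (smoothedOutput_pos hP hW hγ y).le) (Finset.mem_univ y)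

lemma sum_mul_log_smoothedOutput_le (hP : IsPMF P) (hW : IsChannel W) (hγ : 0 < γ) :
    ∑ x, P x * ∑ y, W x y * Real.log (W x y / smoothedOutput γ P W y) ≤ mutInf P W + γ := by
  have hsum : ∑ x, ∑ y, P x * W x y * γ = γ := by
    simp_rw [← Finset.sum_mul, ← Finset.mul_sum, hW.2, mul_one, hP.2, one_mul]
  calc ∑ x, P x * ∑ y, W x y * Real.log (W x y / smoothedOutput γ P W y)
      = ∑ x, ∑ y, P x * W x y * Real.log (W x y / smoothedOutput γ P W y) := by
        simp_rw [Finset.mul_sum, mul_assoc]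
    _ ≤ ∑ x, ∑ y, ((if P x * W x y = 0 then 0
          else P x * W x y * Real.log (W x y / ∑ x', P x' * W x' y)) + P x * W x y * γ) := by
        refine Finset.sum_le_sum fun x _ => Finset.sum_le_sum fun y _ => ?_
        split_ifs with h
        · simp [h]
        · have hPx : 0 < P x := lt_of_le_of_ne (hP.1 x) fun h' => h (by rw [← h', zero_mul])
          have hWx : 0 < W x y := lt_of_le_of_ne (hW.1 x y) fun h' => h (by rw [← h', mul_zero])
          have hqy : 0 < ∑ x', P x' * W x' y := lt_of_lt_of_le (mul_pos hPx hWx)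
            (Finset.single_le_sum (f := fun x => P x * W x y)
              (fun x _ => mul_nonneg (hP.1 x) (hW.1 x y)) (Finset.mem_univ x))
          have hV := smoothedOutput_pos hP hW hγ y
          rw [← mul_add]
          refine mul_le_mul_of_nonneg_left ?_ (mul_pos hPx hWx).le
          rw [Real.log_div hWx.ne' hV.ne', Real.log_div hWx.ne' hqy.ne']
          have h1 : Real.exp (-γ) * ∑ x', P x' * W x' y ≤ smoothedOutput γ P W y := by
            refine le_add_of_nonneg_right (uniformPart_pos hγ).le
          have h2 := Real.log_le_log (mul_pos (Real.exp_pos _) hqy) h1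
          rw [Real.log_mul (Real.exp_pos _).ne' hqy.ne', Real.log_exp] at h2
          linarith
    _ = mutInf P W + γ := by
        simp_rw [Finset.sum_add_distrib, hsum]; rfl

end SmoothedOutput

lemma IsChannel.le_one {X Y : Type*} [Fintype Y] {W : X → Y → ℝ} (hW : IsChannel W) (x : X)
    (y : Y) : W x y ≤ 1 := by
  rw [← hW.2 x]
  exact Finset.single_le_sum (fun y _ => hW.1 x y) (Finset.mem_univ y)

lemma Wn_nonneg {X Y : Type*} [Fintype Y] {W : X → Y → ℝ} (hW : IsChannel W) {n : ℕ}
    (x : Fin n → X) (y : Fin n → Y) : 0 ≤ Wn W n x y :=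
  Finset.prod_nonneg fun _ _ => hW.1 _ _

lemma sum_Wn {X Y : Type*} [Fintype Y] {W : X → Y → ℝ} (hW : IsChannel W) {n : ℕ}
    (x : Fin n → X) : ∑ y, Wn W n x y = 1 :=
  sum_prod_eq_one (fun i => W (x i)) fun i => hW.2 (x i)

/-- Uniform tail bound for the information density of a memoryless channel. -/
lemma exists_Wn_tail_le {X Y : Type*} [Fintype X] [Fintype Y] [Nonempty Y] {W : X → Y → ℝ}
    (hW : IsChannel W) {γ : ℝ} (hγ : 0 < γ) :
    ∃ C : ℝ, ∀ n : ℕ, 0 < n → ∀ (x : Fin n → X) (a : ℝ), mutInf (seqType x) W ≤ a →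
      ∑ y with Real.exp (n * (a + 2 * γ)) * ∏ i, smoothedOutput γ (seqType x) W (y i)
        < Wn W n x y, Wn W n x y ≤ C / n := by
  set B : ℝ := -Real.log ((1 - Real.exp (-γ)) / Fintype.card Y) with hB
  set C₀ : ℝ := ∑ x, ∑ y, (|Real.log (W x y)| + B) ^ 2 with hC₀
  refine ⟨C₀ / γ ^ 2, fun n hn x a hxa => ?_⟩
  have hn' : (0 : ℝ) < n := by exact_mod_cast hn
  have hP := isPMF_seqType hn x
  set V : Y → ℝ := smoothedOutput γ (seqType x) W with hV
  have hVpos : ∀ y, 0 < V y := smoothedOutput_pos hP hW hγ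
  have hmean : ∑ i, ∑ b, W (x i) b * Real.log (W (x i) b / V b) ≤ n * (a + γ) := by
    rw [sum_comp_eq_mul_sum_seqType hn x (fun a => ∑ b, W a b * Real.log (W a b / V b))]
    refine mul_le_mul_of_nonneg_left ?_ hn'.le
    linarith [sum_mul_log_smoothedOutput_le hP hW hγ]
  have hsecond : ∀ x' b, W x' b * Real.log (W x' b / V b) ^ 2 ≤ (|Real.log (W x' b)| + B) ^ 2 := by
    intro x' b
    rcases eq_or_lt_of_le (hW.1 x' b) with h | h
    · rw [← h]; simp [sq_nonneg]
    · have hlogV : |Real.log (V b)| ≤ B := by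
        rw [abs_of_nonpos (Real.log_nonpos (hVpos b).le (smoothedOutput_le_one hP hW hγ b)), hB,
          neg_le_neg_iff]
        exact Real.log_le_log (uniformPart_pos hγ) (le_smoothedOutput hP hW b)
      have h1 : |Real.log (W x' b / V b)| ≤ |Real.log (W x' b)| + B := by
        rw [Real.log_div h.ne' (hVpos b).ne']
        exact (abs_sub _ _).trans (by linarith)
      calc W x' b * Real.log (W x' b / V b) ^ 2 ≤ 1 * Real.log (W x' b / V b) ^ 2 :=
            mul_le_mul_of_nonneg_right (hW.le_one x' b) (sq_nonneg _)
        _ = |Real.log (W x' b / V b)| ^ 2 := by rw [one_mul, sq_abs]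
        _ ≤ _ := pow_le_pow_left₀ (abs_nonneg _) h1 2
  have hvar : ∑ i, ∑ b, W (x i) b * Real.log (W (x i) b / V b) ^ 2 ≤ n * C₀ := by
    calc ∑ i, ∑ b, W (x i) b * Real.log (W (x i) b / V b) ^ 2 ≤ ∑ _i : Fin n, C₀ := by
          refine Finset.sum_le_sum fun i _ => ?_
          refine (Finset.sum_le_sum fun b _ => hsecond (x i) b).trans ?_
          exact Finset.single_le_sum
            (f := fun x' => ∑ b, (|Real.log (W x' b)| + B) ^ 2)
            (fun x' _ => Finset.sum_nonneg fun b _ => sq_nonneg _) (Finset.mem_univ (x i))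
      _ = n * C₀ := by simp
  have htail := sum_prod_tail_le (fun i => W (x i)) (fun i b => Real.log (W (x i) b / V b))
    (fun i b => hW.1 _ _) (fun i => hW.2 _) (mul_pos hn' hγ)
    (Finset.univ.filter fun y => Real.exp (n * (a + 2 * γ)) * ∏ i, V (y i) < Wn W n x y) (by
      intro y hy
      have hy := (Finset.mem_filter.mp hy).2
      have hprod : 0 < ∏ i, V (y i) := Finset.prod_pos fun i _ => hVpos _
      have hWpos : 0 < Wn W n x y := (mul_pos (Real.exp_pos _) hprod).trans hy
      have hne : ∀ i, W (x i) (y i) ≠ 0 := fun i h =>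
        hWpos.ne' (Finset.prod_eq_zero (Finset.mem_univ i) h)
      have h1 := Real.log_lt_log (mul_pos (Real.exp_pos _) hprod) hy
      rw [Real.log_mul (Real.exp_pos _).ne' hprod.ne', Real.log_exp,
        Real.log_prod (fun i _ => (hVpos _).ne'), Wn, Real.log_prod (fun i _ => hne i)] at h1
      have h2 : ∑ i, Real.log (W (x i) (y i) / V (y i)) =
          ∑ i, Real.log (W (x i) (y i)) - ∑ i, Real.log (V (y i)) := by
        rw [← Finset.sum_sub_distrib]
        exact Finset.sum_congr rfl fun i _ => Real.log_div (hne i) (hVpos _).ne'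
      rw [h2]
      linarith)
  refine htail.trans ?_
  calc _ ≤ (n * C₀) / (n * γ) ^ 2 := div_le_div_of_nonneg_right hvar (sq_nonneg _)
    _ = C₀ / γ ^ 2 / n := by field_simp

/-- Exponentials beat polynomials, along the naturals. -/
lemma tendsto_succ_pow_mul_exp_neg (k : ℕ) {γ : ℝ} (hγ : 0 < γ) :
    Filter.Tendsto (fun n : ℕ => ((n : ℝ) + 1) ^ k * Real.exp (-(n * γ)))
      Filter.atTop (nhds 0) := by
  have hlt : |Real.exp (-γ)| < 1 := by
    rw [abs_of_pos (Real.exp_pos _), ← Real.exp_zero]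
    exact Real.exp_lt_exp.mpr (by linarith)
  have h := ((Filter.tendsto_add_atTop_iff_nat 1).mpr
    (tendsto_pow_const_mul_const_pow_of_abs_lt_one k hlt)).mul_const (Real.exp γ)
  rw [zero_mul] at h
  refine h.congr fun n => ?_
  rw [← Real.exp_nat_mul, mul_assoc, ← Real.exp_add]
  push_cast
  congr 2
  ring

/-- For large blocklengths, any input distribution on sequences whose type has mutual information
at most `a` can be simulated at the channel output by the uniform distribution on about `exp (n a)`
sequences. -/
lemma exists_channel_covering {X Y : Type*} [Fintype X] [Fintype Y] [Nonempty Y] {W : X → Y → ℝ}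
    (hW : IsChannel W) {γ δ : ℝ} (hγ : 0 < γ) (hδ : 0 < δ) :
    ∃ n₀ : ℕ, ∀ n, n₀ ≤ n → ∀ (a : ℝ) (K : ℕ), Real.exp (n * (a + 3 * γ)) ≤ K →
      ∀ q : (Fin n → X) → ℝ, IsPMF q → (∀ x, q x ≠ 0 → mutInf (seqType x) W ≤ a) →
      ∃ c : Fin K → Fin n → X, ∀ D : Finset (Fin n → Y),
        |(K : ℝ)⁻¹ * ∑ i, ∑ y ∈ D, Wn W n (c i) y - ∑ x, q x * ∑ y ∈ D, Wn W n x y| ≤ δ := by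
  obtain ⟨C, hC⟩ := exists_Wn_tail_le hW hγ
  have hlim1 : Filter.Tendsto (fun n : ℕ => C / (n : ℝ)) Filter.atTop (nhds 0) :=
    tendsto_const_div_atTop_nhds_zero_nat C
  have hlim2 : Filter.Tendsto (fun n : ℕ => ((n : ℝ) + 1) ^ Fintype.card X * Real.exp (-(n * γ)))
      Filter.atTop (nhds 0) := tendsto_succ_pow_mul_exp_neg _ hγ
  have hev := ((hlim1.eventually_le_const (half_pos hδ)).and
    (hlim2.eventually_le_const (show 0 < (δ / 2) ^ 2 by positivity))).and
      (Filter.eventually_gt_atTop 0)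
  obtain ⟨n₀, hn₀⟩ := Filter.eventually_atTop.mp hev
  refine ⟨n₀, fun n hn a K hK q hq hqa => ?_⟩
  obtain ⟨⟨hn1, hn2⟩, hn3⟩ := hn₀ n hn
  have hKpos' : (0 : ℝ) < K := (Real.exp_pos _).trans_le hK
  have hKpos : 0 < K := by exact_mod_cast hKpos'
  set types := Finset.univ.image (seqType : (Fin n → X) → X → ℝ) with htypes
  have htypes_pmf : ∀ P ∈ types, IsPMF P := by
    intro P hP
    obtain ⟨x, -, rfl⟩ := Finset.mem_image.mp hP
    exact isPMF_seqType hn3 x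
  set r : (Fin n → Y) → ℝ := fun y => ∑ P ∈ types, ∏ i, smoothedOutput γ P W (y i) with hr
  have hprod0 : ∀ P ∈ types, ∀ y : Fin n → Y, 0 ≤ ∏ i, smoothedOutput γ P W (y i) :=
    fun P hP y => Finset.prod_nonneg fun i _ => (smoothedOutput_pos (htypes_pmf P hP) hW hγ _).le
  have hr0 : ∀ y, 0 ≤ r y := fun y => Finset.sum_nonneg fun P hP => hprod0 P hP y
  have hrsum : ∑ y, r y ≤ ((n : ℝ) + 1) ^ Fintype.card X := by
    rw [hr, Finset.sum_comm, Finset.sum_congr rfl (g := fun _ => (1 : ℝ)) fun P hP =>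
      sum_prod_eq_one (fun _ : Fin n => smoothedOutput γ P W)
        fun _ => sum_smoothedOutput (htypes_pmf P hP) hW]
    simp only [Finset.sum_const, nsmul_eq_mul, mul_one]
    exact_mod_cast card_image_seqType_le (X := X) n
  set L := Real.exp (n * (a + 2 * γ)) with hL
  set U : (Fin n → X) → (Fin n → Y) → ℝ :=
    fun x y => if Wn W n x y ≤ L * r y then Wn W n x y else 0 with hU
  have hU0 : ∀ x y, 0 ≤ U x y := by
    intro x y; simp only [hU]; split_ifs
    exacts [Wn_nonneg hW x y, le_rfl]
  have hUle : ∀ x y, U x y ≤ Wn W n x y := by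
    intro x y; simp only [hU]; split_ifs
    exacts [le_rfl, Wn_nonneg hW x y]
  have hUL : ∀ x y, U x y ≤ L * r y := by
    intro x y; simp only [hU]; split_ifs with h
    exacts [h, mul_nonneg (Real.exp_pos _).le (hr0 y)]
  have hdefect : ∀ x, mutInf (seqType x) W ≤ a → ∀ D : Finset (Fin n → Y),
      ∑ y ∈ D, Wn W n x y - δ / 2 ≤ ∑ y ∈ D, U x y := by
    intro x hx D
    have h1 : ∑ y ∈ D, (Wn W n x y - U x y) ≤ C / n := by
      refine le_trans ?_ (hC n hn3 x a hx)
      rw [Finset.sum_filter]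
      refine (Finset.sum_le_sum_of_subset_of_nonneg (Finset.subset_univ D)
        fun y _ _ => sub_nonneg.mpr (hUle x y)).trans ?_
      refine Finset.sum_le_sum fun y _ => ?_
      have hle : L * ∏ i, smoothedOutput γ (seqType x) W (y i) ≤ L * r y :=
        mul_le_mul_of_nonneg_left (Finset.single_le_sum
          (f := fun P => ∏ i, smoothedOutput γ P W (y i)) (fun P hP => hprod0 P hP y)
          (Finset.mem_image_of_mem _ (Finset.mem_univ x))) (Real.exp_pos _).le
      simp only [hU]
      split_ifs with h1 h2 h2
      · simpa using Wn_nonneg hW x y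
      · simp
      · simp
      · exact absurd (hle.trans_lt (not_le.mp h1)) h2
    rw [Finset.sum_sub_distrib] at h1
    linarith
  obtain ⟨c, hc, hcov⟩ := exists_soft_covering q hq U hU0
    (fun x => (Finset.sum_le_sum fun y _ => hUle x y).trans_eq (sum_Wn hW x)) r hr0
    (Real.exp_pos _).le hUL hKpos
  have hs : √(L * (∑ y, r y) / K) ≤ δ / 2 := by
    rw [Real.sqrt_le_left (by positivity)]
    refine le_trans ?_ hn2
    rw [div_le_iff₀ hKpos']
    calc L * ∑ y, r y ≤ L * ((n : ℝ) + 1) ^ Fintype.card X :=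
          mul_le_mul_of_nonneg_left hrsum (Real.exp_pos _).le
      _ = ((n : ℝ) + 1) ^ Fintype.card X * Real.exp (-(n * γ)) *
            Real.exp (n * (a + 3 * γ)) := by
          rw [mul_assoc, ← Real.exp_add, hL, mul_comm]; congr 2; ring
      _ ≤ _ := mul_le_mul_of_nonneg_left hK (by positivity)
  refine ⟨c, fun D => ?_⟩
  have hUdiff : |(K : ℝ)⁻¹ * ∑ i, ∑ y ∈ D, U (c i) y - ∑ x, q x * ∑ y ∈ D, U x y| ≤ δ / 2 := by
    have heq : (K : ℝ)⁻¹ * ∑ i, ∑ y ∈ D, U (c i) y - ∑ x, q x * ∑ y ∈ D, U x y =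
        ∑ y ∈ D, ((K : ℝ)⁻¹ * ∑ i, U (c i) y - ∑ b, q b * U b y) := by
      rw [Finset.sum_sub_distrib, ← Finset.mul_sum]
      congr 1
      · rw [Finset.sum_comm]
      · simp_rw [Finset.mul_sum]; exact Finset.sum_comm
    rw [heq]
    refine (Finset.abs_sum_le_sum_abs _ _).trans (le_trans ?_ (hcov.trans hs))
    exact Finset.sum_le_sum_of_subset_of_nonneg (Finset.subset_univ D) fun _ _ _ => abs_nonneg _
  have hc1 : (K : ℝ)⁻¹ * ∑ i, ∑ y ∈ D, U (c i) y ≤ (K : ℝ)⁻¹ * ∑ i, ∑ y ∈ D, Wn W n (c i) y :=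
    mul_le_mul_of_nonneg_left (Finset.sum_le_sum fun i _ => Finset.sum_le_sum fun y _ => hUle _ _)
      (by positivity)
  have hc2 : (K : ℝ)⁻¹ * ∑ i, ∑ y ∈ D, Wn W n (c i) y - δ / 2 ≤
      (K : ℝ)⁻¹ * ∑ i, ∑ y ∈ D, U (c i) y := by
    calc (K : ℝ)⁻¹ * ∑ i, ∑ y ∈ D, Wn W n (c i) y - δ / 2
        = (K : ℝ)⁻¹ * ∑ i, (∑ y ∈ D, Wn W n (c i) y - δ / 2) := by
          rw [Finset.sum_sub_distrib, Finset.sum_const, Finset.card_univ, Fintype.card_fin,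
            nsmul_eq_mul]
          field_simp
      _ ≤ _ := mul_le_mul_of_nonneg_left
          (Finset.sum_le_sum fun i _ => hdefect _ (hqa _ (hc i)) D) (by positivity)
  have hq1 : ∑ x, q x * ∑ y ∈ D, U x y ≤ ∑ x, q x * ∑ y ∈ D, Wn W n x y :=
    Finset.sum_le_sum fun x _ => mul_le_mul_of_nonneg_left
      (Finset.sum_le_sum fun y _ => hUle _ _) (hq.1 x)
  have hq2 : ∑ x, q x * ∑ y ∈ D, Wn W n x y - δ / 2 ≤ ∑ x, q x * ∑ y ∈ D, U x y := by
    calc ∑ x, q x * ∑ y ∈ D, Wn W n x y - δ / 2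
        = ∑ x, q x * (∑ y ∈ D, Wn W n x y - δ / 2) := by
          simp_rw [mul_sub]
          rw [Finset.sum_sub_distrib, ← Finset.sum_mul, hq.2, one_mul]
      _ ≤ _ := by
          refine Finset.sum_le_sum fun x _ => ?_
          by_cases hx : q x = 0
          · simp [hx]
          · exact mul_le_mul_of_nonneg_left (hdefect x (hqa x hx) D) (hq.1 x)
  rw [abs_le] at hUdiff ⊢
  constructor <;> linarith [hUdiff.1, hUdiff.2]

/-- In an identification code only few messages can put mass more than `l1 + l2` on sequences whose
type has mutual information at most `a`. -/
lemma exists_card_heavy_le {X Y : Type*} [Fintype X] [Nonempty X] [Fintype Y] [Nonempty Y]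
    {W : X → Y → ℝ} (hW : IsChannel W) {γ l1 l2 c : ℝ} (hγ : 0 < γ) (h1 : 0 < l1) (h2 : 0 < l2)
    (hc : l1 + l2 < c) :
    ∃ n₀ : ℕ, ∀ n, n₀ ≤ n → ∀ (a : ℝ) (K : ℕ), Real.exp (n * (a + 3 * γ)) ≤ K →
      ∀ {M : Type} [Fintype M] (Q : M → (Fin n → X) → ℝ) (D : M → Finset (Fin n → Y)),
      (∀ m, IsPMF (Q m)) → IDCodeErr n W Q D l1 l2 →
      #{m | c ≤ ∑ x with mutInf (seqType x) W ≤ a, Q m x} ≤ (Fintype.card X ^ n) ^ K := by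
  have hcpos : 0 < c := by linarith
  set δ : ℝ := (1 - (l1 + l2) / c) / 3 with hδdef
  have hratio : (l1 + l2) / c < 1 := (div_lt_one hcpos).mpr hc
  have hδ : 0 < δ := by rw [hδdef]; linarith
  obtain ⟨n₀, hn₀⟩ := exists_channel_covering hW hγ hδ
  refine ⟨n₀, fun n hn a K hK M _ Q D hQ hD => ?_⟩
  have hKpos : (0 : ℝ) < K := (Real.exp_pos _).trans_le hK
  have hcode : ∀ m, c ≤ ∑ x with mutInf (seqType x) W ≤ a, Q m x →
      ∃ e : Fin K → Fin n → X, ∀ (E : Finset (Fin n → Y)) (l : ℝ),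
        ∑ x, Q m x * ∑ y ∈ E, Wn W n x y ≤ l →
        (K : ℝ)⁻¹ * ∑ i, ∑ y ∈ E, Wn W n (e i) y ≤ l / c + δ := by
    intro m hm
    set s := ∑ x with mutInf (seqType x) W ≤ a, Q m x with hs
    have hspos : 0 < s := hcpos.trans_le hm
    set q : (Fin n → X) → ℝ := fun x => if mutInf (seqType x) W ≤ a then Q m x / s else 0 with hq
    have hq0 : ∀ x, 0 ≤ q x := by
      intro x; simp only [hq]; split_ifs
      exacts [div_nonneg ((hQ m).1 x) hspos.le, le_rfl]
    have hqQ : ∀ x, q x ≤ Q m x / s := by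
      intro x; simp only [hq]; split_ifs
      exacts [le_rfl, div_nonneg ((hQ m).1 x) hspos.le]
    have hqpmf : IsPMF q := by
      refine ⟨hq0, ?_⟩
      rw [hq, ← Finset.sum_filter, ← Finset.sum_div, ← hs, div_self hspos.ne']
    obtain ⟨e, he⟩ := hn₀ n hn a K hK q hqpmf (by
      intro x hx
      by_contra h
      exact hx (if_neg h))
    refine ⟨e, fun E l hl => ?_⟩
    have hE0 : ∀ x, 0 ≤ ∑ y ∈ E, Wn W n x y := fun x =>
      Finset.sum_nonneg fun y _ => Wn_nonneg hW x y
    have hQ0 : 0 ≤ ∑ x, Q m x * ∑ y ∈ E, Wn W n x y :=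
      Finset.sum_nonneg fun x _ => mul_nonneg ((hQ m).1 x) (hE0 x)
    have hle : ∑ x, q x * ∑ y ∈ E, Wn W n x y ≤ l / c := by
      calc ∑ x, q x * ∑ y ∈ E, Wn W n x y ≤ ∑ x, Q m x / s * ∑ y ∈ E, Wn W n x y :=
            Finset.sum_le_sum fun x _ => mul_le_mul_of_nonneg_right (hqQ x) (hE0 x)
        _ = (∑ x, Q m x * ∑ y ∈ E, Wn W n x y) / s := by
            rw [Finset.sum_div]
            exact Finset.sum_congr rfl fun x _ => by ring
        _ ≤ l / c := div_le_div₀ (hQ0.trans hl) hl hcpos hm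
    linarith [(abs_le.mp (he E)).2]
  choose! e he using hcode
  have hinj : Set.InjOn e (Finset.univ.filter fun m =>
      c ≤ ∑ x with mutInf (seqType x) W ≤ a, Q m x : Finset M) := by
    intro m hm m' hm' hee
    by_contra hne
    have hm := (Finset.mem_filter.mp hm).2
    have hm' := (Finset.mem_filter.mp hm').2
    have e1 := he m hm _ _ (hD.1 m)
    have e2 := he m' hm' _ _ (hD.2 m' m (Ne.symm hne))
    rw [← hee] at e2
    have htot : (K : ℝ)⁻¹ * ∑ i, ∑ y ∈ (D m)ᶜ, Wn W n (e m i) y +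
        (K : ℝ)⁻¹ * ∑ i, ∑ y ∈ D m, Wn W n (e m i) y = 1 := by
      rw [← mul_add, ← Finset.sum_add_distrib]
      simp_rw [Finset.sum_compl_add_sum, sum_Wn hW]
      simp [hKpos.ne']
    have hsplit : (l1 + l2) / c = l1 / c + l2 / c := add_div _ _ _
    linarith
  refine (Finset.card_le_card_of_injOn e (fun _ _ => Finset.mem_coe.mpr (Finset.mem_univ _))
    hinj).trans_eq ?_
  simp

/-- The number of tuples of about `exp (n (R - ε/2))` sequences of length `n` over an alphabet of
size `d` is eventually negligible compared with `exp (exp (n R))`. -/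
lemma eventually_tuples_le {ε R δ : ℝ} (hε : 0 < ε) (hR : ε ≤ R) (hδ : 0 < δ) {d : ℕ}
    (hd : 0 < d) :
    ∀ᶠ n : ℕ in Filter.atTop,
      (((d ^ n) ^ ⌈Real.exp (n * (R - ε / 2))⌉₊ : ℕ) : ℝ) ≤ δ * Real.exp (Real.exp (n * R)) := by
  have hlogd : 0 ≤ Real.log d := Real.log_nonneg (by exact_mod_cast hd)
  have hlim := (tendsto_succ_pow_mul_exp_neg 1 (half_pos hε)).const_mul (2 * Real.log d)
  rw [mul_zero] at hlim
  have hbig : Filter.Tendsto (fun n : ℕ => (n : ℝ) * ε) Filter.atTop Filter.atTop :=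
    tendsto_natCast_atTop_atTop.atTop_mul_const hε
  filter_upwards [hlim.eventually_le_const (show (0 : ℝ) < 1 / 2 by norm_num),
    hbig.eventually_ge_atTop (-2 * Real.log δ)] with n hn1 hn2
  set K := ⌈Real.exp (n * (R - ε / 2))⌉₊ with hK
  have hn0 : (0 : ℝ) ≤ n := n.cast_nonneg
  have hK2 : (K : ℝ) ≤ 2 * Real.exp (n * (R - ε / 2)) := by
    have h1 := (Nat.ceil_lt_add_one (Real.exp_pos (n * (R - ε / 2))).le).le
    have h2 : 1 ≤ Real.exp (n * (R - ε / 2)) :=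
      Real.one_le_exp (mul_nonneg hn0 (by linarith))
    rw [← hK] at h1
    linarith
  have hdpos : (0 : ℝ) < d := by exact_mod_cast hd
  have hrew : (((d ^ n) ^ K : ℕ) : ℝ) = Real.exp (n * K * Real.log d) := by
    push_cast
    rw [← pow_mul, ← Real.rpow_natCast, Real.rpow_def_of_pos hdpos]
    push_cast
    congr 1; ring
  rw [hrew]
  nth_rw 1 [← Real.exp_log hδ]
  rw [← Real.exp_add]
  refine Real.exp_le_exp.mpr ?_
  have hsplit : Real.exp (n * (R - ε / 2)) = Real.exp (n * R) * Real.exp (-(n * (ε / 2))) := by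
    rw [← Real.exp_add]; congr 1; ring
  have hfirst : n * K * Real.log d ≤ 1 / 2 * Real.exp (n * R) := by
    calc n * K * Real.log d ≤ (n + 1) * (2 * Real.exp (n * (R - ε / 2))) * Real.log d := by
          gcongr; linarith
      _ = (2 * Real.log d * (((n : ℝ) + 1) ^ 1 * Real.exp (-(n * (ε / 2))))) *
            Real.exp (n * R) := by rw [hsplit]; ring
      _ ≤ _ := mul_le_mul_of_nonneg_right hn1 (Real.exp_pos _).le
  have hlast : n * ε ≤ Real.exp (n * R) := by
    have := Real.add_one_le_exp (n * R)
    have := mul_le_mul_of_nonneg_left hR hn0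
    linarith
  linarith

/-- Strong converse for a single receiver, in a form that constrains the average over the messages
of the input mass on sequences of low mutual information. -/
lemma exists_low_information_mass_le {X Y : Type*} [Fintype X] [Nonempty X] [Fintype Y]
    [Nonempty Y] {W : X → Y → ℝ} (hW : IsChannel W) {R ε δ l1 l2 : ℝ} (hε : 0 < ε) (hδ : 0 < δ)
    (h1 : 0 < l1) (h2 : 0 < l2) :
    ∃ n₀ : ℕ, ∀ n, n₀ ≤ n →
      ∀ {M : Type} [Fintype M] (Q : M → (Fin n → X) → ℝ) (D : M → Finset (Fin n → Y)),
      Real.exp (Real.exp (n * R)) ≤ Fintype.card M →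
      (∀ m, IsPMF (Q m)) → IDCodeErr n W Q D l1 l2 →
      ∑ m, ∑ x with mutInf (seqType x) W ≤ R - ε, Q m x ≤ (l1 + l2 + δ) * Fintype.card M := by
  rcases lt_or_ge R ε with hRε | hRε
  · refine ⟨1, fun n hn M _ Q D _ _ _ => ?_⟩
    rw [Finset.sum_eq_zero fun m _ => ?_]
    · positivity
    · rw [Finset.filter_false_of_mem, Finset.sum_empty]
      intro x _ hx
      linarith [mutInf_nonneg (isPMF_seqType hn x) hW]
  obtain ⟨n₁, hn₁⟩ := exists_card_heavy_le hW (γ := ε / 6) (c := l1 + l2 + δ / 2) (by positivity)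
    h1 h2 (by linarith)
  obtain ⟨n₂, hn₂⟩ := Filter.eventually_atTop.mp
    (eventually_tuples_le hε hRε (half_pos hδ) (Fintype.card_pos (α := X)))
  refine ⟨max n₁ n₂, fun n hn M _ Q D hM hQ hD => ?_⟩
  have hheavy := hn₁ n ((le_max_left _ _).trans hn) (R - ε) ⌈Real.exp (n * (R - ε / 2))⌉₊
    (by
      refine le_trans (le_of_eq ?_) (Nat.le_ceil _)
      congr 1; ring) Q D hQ hD
  have hbound := hn₂ n ((le_max_right _ _).trans hn)
  set S : Finset M := {m | l1 + l2 + δ / 2 ≤ ∑ x with mutInf (seqType x) W ≤ R - ε, Q m x} with hS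
  have hSle : (#S : ℝ) ≤ δ / 2 * Fintype.card M :=
    le_trans (by exact_mod_cast hheavy)
      (hbound.trans (mul_le_mul_of_nonneg_left hM (by positivity)))
  calc ∑ m, ∑ x with mutInf (seqType x) W ≤ R - ε, Q m x
      ≤ ∑ m, ((l1 + l2 + δ / 2) + if m ∈ S then 1 else 0) := by
        refine Finset.sum_le_sum fun m _ => ?_
        split_ifs with hm
        · have : ∑ x with mutInf (seqType x) W ≤ R - ε, Q m x ≤ 1 := by
            rw [← (hQ m).2]
            exact Finset.sum_le_sum_of_subset_of_nonneg (Finset.subset_univ _)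
              fun x _ _ => (hQ m).1 x
          linarith
        · rw [hS, Finset.mem_filter, not_and, not_le] at hm
          linarith [hm (Finset.mem_univ m)]
    _ = (l1 + l2 + δ / 2) * Fintype.card M + #S := by
        rw [Finset.sum_add_distrib]
        simp
        ring
    _ ≤ _ := by linarith

lemma IsBC.isChannel_margY {X Y Z : Type*} [Fintype Y] [Fintype Z] {W : X → Y → Z → ℝ}
    (hW : IsBC W) : IsChannel (margY W) :=
  ⟨fun x y => Finset.sum_nonneg fun z _ => hW.1 x y z, hW.2⟩

lemma IsBC.isChannel_margZ {X Y Z : Type*} [Fintype Y] [Fintype Z] {W : X → Y → Z → ℝ}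
    (hW : IsBC W) : IsChannel (margZ W) :=
  ⟨fun x z => Finset.sum_nonneg fun y _ => hW.1 x y z, fun x => by
    rw [← hW.2 x]; exact Finset.sum_comm⟩

/-- The uniform average of probability mass functions is a probability mass function. -/
lemma isPMF_average {A : Type*} [Fintype A] {k : ℕ} (hk : 0 < k) {Q : Fin k → A → ℝ}
    (hQ : ∀ m, IsPMF (Q m)) : IsPMF fun x => (k : ℝ)⁻¹ * ∑ m, Q m x := by
  refine ⟨fun x => mul_nonneg (by positivity) (Finset.sum_nonneg fun m _ => (hQ m).1 x), ?_⟩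
  have hk' : (k : ℝ) ≠ 0 := by exact_mod_cast hk.ne'
  rw [← Finset.mul_sum, Finset.sum_comm]
  simp [fun m => (hQ m).2, hk']

lemma exp_exp_mul_max_le {n k k' : ℕ} {R R' : ℝ} (hk : k = ⌈Real.exp (Real.exp (n * R))⌉₊)
    (hk' : k' = ⌈Real.exp (Real.exp (n * R'))⌉₊) :
    Real.exp (Real.exp (n * max R R')) ≤ Fintype.card (Fin k × Fin k') := by
  have h1 : Real.exp (Real.exp (n * R)) ≤ k := hk ▸ Nat.le_ceil _
  have h2 : Real.exp (Real.exp (n * R')) ≤ k' := hk' ▸ Nat.le_ceil _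
  have h3 : 1 ≤ Real.exp (Real.exp (n * R)) := Real.one_le_exp (Real.exp_pos _).le
  have h4 : 1 ≤ Real.exp (Real.exp (n * R')) := Real.one_le_exp (Real.exp_pos _).le
  rw [Fintype.card_prod, Fintype.card_fin, Fintype.card_fin, Nat.cast_mul]
  rcases max_choice R R' with h | h <;> rw [h] <;> nlinarith

/-- **Claim 7.** Strong converse for the BC with a common
message. -/
theorem bc_cm_id_strong_converse
    {X Y Z : Type} [Fintype X] [Fintype Y] [Fintype Z]
    [Nonempty X] [Nonempty Y] [Nonempty Z]
    (W : X → Y → Z → ℝ) (hW : IsBC W)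
    (R RY RZ : ℝ) (hR : 0 ≤ R) (hRY : 0 ≤ RY) (hRZ : 0 ≤ RZ)
    (l1Y l2Y l1Z l2Z : ℝ)
    (h1Y : 0 < l1Y) (h2Y : 0 < l2Y) (h1Z : 0 < l1Z) (h2Z : 0 < l2Z)
    (hsum : l1Y + l2Y + l1Z + l2Z < 1)
    (ε : ℝ) (hε : 0 < ε) :
    ∃ η₀ : ℕ, ∀ n : ℕ, η₀ ≤ n →
      ∀ k kY kZ : ℕ,
        k = Nat.ceil (Real.exp (Real.exp (n * R))) →
        kY = Nat.ceil (Real.exp (Real.exp (n * RY))) →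
        kZ = Nat.ceil (Real.exp (Real.exp (n * RZ))) →
        ∀ (Q : Fin k → Fin kY → Fin kZ → (Fin n → X) → ℝ)
          (DY : Fin k → Fin kY → Finset (Fin n → Y))
          (DZ : Fin k → Fin kZ → Finset (Fin n → Z)),
          IsCMIDCode n k kY kZ W Q DY DZ l1Y l2Y l1Z l2Z →
          ∃ P : X → ℝ, IsPMF P ∧
            R < mutInf P (margY W) + ε ∧
            RY < mutInf P (margY W) + ε ∧
            R < mutInf P (margZ W) + ε ∧
            RZ < mutInf P (margZ W) + ε := by
  obtain ⟨δ, hδ, hδsum⟩ : ∃ δ : ℝ, 0 < δ ∧ (l1Y + l2Y + δ) + (l1Z + l2Z + δ) < 1 :=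
    ⟨(1 - (l1Y + l2Y + l1Z + l2Z)) / 3, by linarith, by linarith⟩
  obtain ⟨n₁, hn₁⟩ := exists_low_information_mass_le hW.isChannel_margY (R := max R RY)
    hε hδ h1Y h2Y
  obtain ⟨n₂, hn₂⟩ := exists_low_information_mass_le hW.isChannel_margZ (R := max R RZ)
    hε hδ h1Z h2Z
  refine ⟨max 1 (max n₁ n₂), fun n hn k kY kZ hk hkY hkZ Q DY DZ ⟨hQ, hY, hZ⟩ => ?_⟩
  have hnpos : 0 < n := (le_max_left _ _).trans hn
  have hn' := (le_max_right _ _).trans hn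
  have hkpos : 0 < k := hk ▸ Nat.ceil_pos.mpr (Real.exp_pos _)
  have hkYpos : 0 < kY := hkY ▸ Nat.ceil_pos.mpr (Real.exp_pos _)
  have hkZpos : 0 < kZ := hkZ ▸ Nat.ceil_pos.mpr (Real.exp_pos _)
  have hkR : (0 : ℝ) < k := by exact_mod_cast hkpos
  have hkYR : (0 : ℝ) < kY := by exact_mod_cast hkYpos
  have hkZR : (0 : ℝ) < kZ := by exact_mod_cast hkZpos
  have hmassY := hn₁ n ((le_max_left _ _).trans hn') _ _ (exp_exp_mul_max_le hk hkY)
    (fun p => isPMF_average hkZpos fun mz => hQ p.1 p.2 mz) hY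
  have hmassZ := hn₂ n ((le_max_right _ _).trans hn') _ _ (exp_exp_mul_max_le hk hkZ)
    (fun p => isPMF_average hkYpos fun my => hQ p.1 my p.2) hZ
  set BY : Finset (Fin n → X) := {x | mutInf (seqType x) (margY W) ≤ max R RY - ε} with hBY
  set BZ : Finset (Fin n → X) := {x | mutInf (seqType x) (margZ W) ≤ max R RZ - ε} with hBZ
  have hsumY : ∑ m, ∑ my, ∑ mz, ∑ x ∈ BY, Q m my mz x ≤ (l1Y + l2Y + δ) * (k * kY * kZ) := by
    rw [Fintype.sum_prod_type] at hmassY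
    simp only [Fintype.card_prod, Fintype.card_fin, Nat.cast_mul, ← Finset.mul_sum] at hmassY
    rw [inv_mul_le_iff₀ hkZR] at hmassY
    calc ∑ m, ∑ my, ∑ mz, ∑ x ∈ BY, Q m my mz x
        = ∑ m, ∑ my, ∑ x ∈ BY, ∑ mz, Q m my mz x :=
          Finset.sum_congr rfl fun m _ => Finset.sum_congr rfl fun my _ => Finset.sum_comm
      _ ≤ _ := hmassY
      _ = _ := by ring
  have hsumZ : ∑ m, ∑ my, ∑ mz, ∑ x ∈ BZ, Q m my mz x ≤ (l1Z + l2Z + δ) * (k * kY * kZ) := by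
    rw [Fintype.sum_prod_type] at hmassZ
    simp only [Fintype.card_prod, Fintype.card_fin, Nat.cast_mul, ← Finset.mul_sum] at hmassZ
    rw [inv_mul_le_iff₀ hkYR] at hmassZ
    calc ∑ m, ∑ my, ∑ mz, ∑ x ∈ BZ, Q m my mz x
        = ∑ m, ∑ mz, ∑ x ∈ BZ, ∑ my, Q m my mz x := by
          refine Finset.sum_congr rfl fun m _ => ?_
          rw [Finset.sum_comm]
          exact Finset.sum_congr rfl fun mz _ => Finset.sum_comm
      _ ≤ _ := hmassZ
      _ = _ := by ring
  obtain ⟨x, hxY, hxZ⟩ : ∃ x, x ∉ BY ∧ x ∉ BZ := by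
    by_contra! hcover
    have hone : ∀ m my mz, 1 ≤ ∑ x ∈ BY, Q m my mz x + ∑ x ∈ BZ, Q m my mz x := by
      intro m my mz
      rw [← (hQ m my mz).2, ← Finset.sum_union_inter]
      refine le_add_of_le_of_nonneg
        (Finset.sum_le_sum_of_subset_of_nonneg (fun x _ => ?_) fun x _ _ => (hQ m my mz).1 x)
        (Finset.sum_nonneg fun x _ => (hQ m my mz).1 x)
      by_cases hx : x ∈ BY
      · exact Finset.mem_union_left _ hx
      · exact Finset.mem_union_right _ (hcover x hx)
    have htot : (k * kY * kZ : ℝ) ≤ ∑ m, ∑ my, ∑ mz, ∑ x ∈ BY, Q m my mz x +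
        ∑ m, ∑ my, ∑ mz, ∑ x ∈ BZ, Q m my mz x := by
      simp_rw [← Finset.sum_add_distrib]
      calc (k * kY * kZ : ℝ) = ∑ _m : Fin k, ∑ _my : Fin kY, ∑ _mz : Fin kZ, (1 : ℝ) := by
            simp [mul_assoc]
        _ ≤ _ := Finset.sum_le_sum fun m _ => Finset.sum_le_sum fun my _ =>
            Finset.sum_le_sum fun mz _ => hone m my mz
    nlinarith [mul_pos (mul_pos hkR hkYR) hkZR]
  simp only [hBY, hBZ, Finset.mem_filter, Finset.mem_univ, true_and, not_le] at hxY hxZ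
  refine ⟨seqType x, isPMF_seqType hnpos x, ?_, ?_, ?_, ?_⟩
  · linarith [le_max_left R RY]
  · linarith [le_max_right R RY]
  · linarith [le_max_left R RZ]
  · linarith [le_max_right R RZ]
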